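/- For all μ > Ā and every x ≥ 0, the homogenized metric m̄_μ(·,x) is globally Lipschitz and is a viscosity solution of H̄_R(D m̄_μ(y,x)) = μ for y > 0, y ≠ x, with m̄_μ(x,x) = 0. Symmetrically, for every x ≤ 0, m̄_μ(·,x) is a viscosity solution of H̄_L(D m̄_μ(y,x)) = μ for y < 0, y ≠ x, with m̄_μ(x,x) = 0. -/

import Mathlib

open MeasureTheory ProbabilityTheory Set Filter Topology

noncomputable section

variable {Ω : Type*}

/-! ### Viscosity solutions of stationary Hamilton-Jacobi equations -/

/-- Viscosity subsolution of `G(Du, y) ≤ μ` on the set `U`. -/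
def IsViscSubsol (G : ℝ → ℝ → ℝ) (μ : ℝ) (U : Set ℝ) (u : ℝ → ℝ) : Prop :=
  ∀ φ : ℝ → ℝ, ContDiff ℝ 1 φ → ∀ y₀ ∈ U,
    IsLocalMaxOn (fun y => u y - φ y) U y₀ → G (deriv φ y₀) y₀ ≤ μ

/-- Viscosity supersolution of `G(Du, y) ≥ μ` on the set `U`. -/
def IsViscSupersol (G : ℝ → ℝ → ℝ) (μ : ℝ) (U : Set ℝ) (u : ℝ → ℝ) : Prop :=
  ∀ φ : ℝ → ℝ, ContDiff ℝ 1 φ → ∀ y₀ ∈ U,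
    IsLocalMinOn (fun y => u y - φ y) U y₀ → μ ≤ G (deriv φ y₀) y₀

/-- Viscosity solution of `G(Du, y) = μ` on the set `U`. -/
def IsViscSol (G : ℝ → ℝ → ℝ) (μ : ℝ) (U : Set ℝ) (u : ℝ → ℝ) : Prop :=
  IsViscSubsol G μ U u ∧ IsViscSupersol G μ U u

/-- Globally Lipschitz real function. -/
def IsLip (v : ℝ → ℝ) : Prop := ∃ K : NNReal, LipschitzWith K v

/-- Assumptions (H1)–(H6) on a random Hamiltonian `H = H(p, y, ω)`. -/
structure HamHyp [MeasurableSpace Ω] (H : ℝ → ℝ → Ω → ℝ) : Prop where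
  meas : Measurable fun q : ℝ × ℝ × Ω => H q.1 q.2.1 q.2.2
  lip_p : ∃ K : NNReal, ∀ (y : ℝ) (ω : Ω), LipschitzWith K fun p => H p y ω
  bounds : ∃ c₀ C₀ γ : ℝ, 0 < c₀ ∧ 0 < C₀ ∧ 0 < γ ∧
    ∀ (p y : ℝ) (ω : Ω), -c₀ * |p + γ| ≤ H p y ω ∧ H p y ω ≤ C₀ * |p + γ|
  coercive : ∀ M : ℝ, ∃ R : ℝ, ∀ (p y : ℝ) (ω : Ω), R ≤ |p| → M ≤ H p y ω
  modulus : ∃ w : ℝ → ℝ, Monotone w ∧ w 0 = 0 ∧ ContinuousAt w 0 ∧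
    ∀ (p x y : ℝ) (ω : Ω), |H p y ω - H p x ω| ≤ w (|x - y| * (1 + |p|))
  convex_p : ∀ (y : ℝ) (ω : Ω), ConvexOn ℝ Set.univ fun p => H p y ω
  min_at_zero : ∀ (p y : ℝ) (ω : Ω), H 0 y ω ≤ H p y ω

/-- The stochastic flux limiter `Ã(ω)`: the smallest `μ` such that the equation
`H(Dv, y, ω) ≤ μ` admits a globally Lipschitz viscosity subsolution on `ℝ`. -/
def fluxLimiter (H : ℝ → ℝ → Ω → ℝ) (ω : Ω) : ℝ :=
  sInf {μ : ℝ | ∃ v : ℝ → ℝ, IsLip v ∧ IsViscSubsol (fun p y => H p y ω) μ Set.univ v}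

/-- The maximal subsolution `m_μ(y, x, ω)` of the metric problem. -/
def metricSol (H : ℝ → ℝ → Ω → ℝ) (μ : ℝ) (ω : Ω) (y x : ℝ) : ℝ :=
  sSup {r : ℝ | ∃ v : ℝ → ℝ, IsLip v ∧
    IsViscSubsol (fun p y => H p y ω) μ Set.univ v ∧ r = v y - v x}

/-! ### Stochastic framework -/

/-- Stationarity (H8) of a Hamiltonian with respect to a translation group `τ`. -/
def Stationary (τ : ℝ → Ω → Ω) (H : ℝ → ℝ → Ω → ℝ) : Prop :=
  ∀ (p y z : ℝ) (ω : Ω), H p (y + z) ω = H p y (τ z ω)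

/-- An ergodic group of measure-preserving transformations of `(Ω, F, P)`. -/
structure ErgodicSetup [MeasurableSpace Ω] (P : Measure Ω) (τ : ℝ → Ω → Ω) : Prop where
  meas : ∀ z, Measurable (τ z)
  preserving : ∀ z, MeasurePreserving (τ z) P P
  add : ∀ x z : ℝ, τ (x + z) = τ x ∘ τ z
  ergodic : ∀ A : Set Ω, MeasurableSet A → (∀ z, τ z ⁻¹' A = A) → P A = 0 ∨ P A = 1

/-- σ-algebra generated by the maps `ω ↦ H(p, y, ω)`, `y ∈ U`, `p ∈ ℝ`. -/
def genSigma [MeasurableSpace Ω] (H : ℝ → ℝ → Ω → ℝ) (U : Set ℝ) : MeasurableSpace Ω :=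
  ⨆ y ∈ U, ⨆ p : ℝ, MeasurableSpace.comap (fun ω => H p y ω) inferInstance

/-- Unit range of dependence (H9). -/
def UnitRangeDep [MeasurableSpace Ω] (P : Measure Ω) (H : ℝ → ℝ → Ω → ℝ) : Prop :=
  ∀ U V : Set ℝ, MeasurableSet U → MeasurableSet V →
    (∀ x ∈ U, ∀ y ∈ V, 1 ≤ |x - y|) →
    ProbabilityTheory.Indep (genSigma H U) (genSigma H V) P

/-! ### The decompositions (H7-WFL) and (H7-ε) for a family `H ε` of Hamiltonians -/

/-- (H7-WFL). -/
def DecompWFL (HL HR : ℝ → ℝ → Ω → ℝ) (H : ℝ → ℝ → ℝ → Ω → ℝ) : Prop :=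
  ∃ φ : ℝ → ℝ, ContDiff ℝ (⊤ : ℕ∞) φ ∧ Antitone φ ∧
    (∀ y : ℝ, y ≤ -1 → φ y = 1) ∧ (∀ y : ℝ, 1 ≤ y → φ y = 0) ∧
    ∀ (ε p y : ℝ) (ω : Ω), H ε p y ω = φ y * HL p y ω + (1 - φ y) * HR p y ω

/-- (H7-ε). -/
def DecompEps (HL HR H0 : ℝ → ℝ → Ω → ℝ) (H : ℝ → ℝ → ℝ → Ω → ℝ) : Prop :=
  (∀ (p y : ℝ) (ω : Ω), HL p y ω ≤ H0 p y ω ∧ HR p y ω ≤ H0 p y ω) ∧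
  ∃ ψ : ℝ → ℝ → ℝ,
    (∀ ε : ℝ, 0 < ε → ContDiff ℝ (⊤ : ℕ∞) (ψ ε) ∧
      (∀ y : ℝ, 2 / Real.sqrt ε < y → ψ ε y = 1) ∧
      (∀ y : ℝ, y < 1 / Real.sqrt ε → ψ ε y = 0)) ∧
    ∀ ε : ℝ, 0 < ε → ∀ (p y : ℝ) (ω : Ω), H ε p y ω =
      ψ ε (-y) * HL p y ω + (1 - ψ ε (-y)) * (1 - ψ ε y) * H0 p y ω + ψ ε y * HR p y ω

/-! ### Effective Hamiltonians -/

/-- The effective Hamiltonian `H̄_α(p)` at a fixed `ω`: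
`inf` of the `μ` for which `H_α(p + Dv, y, ω) ≤ μ` has a Lipschitz, strictly sublinear
viscosity subsolution. -/
def effectiveHam (Hα : ℝ → ℝ → Ω → ℝ) (ω : Ω) (p : ℝ) : ℝ :=
  sInf {μ : ℝ | ∃ v : ℝ → ℝ, IsLip v ∧
    Tendsto (fun y => v y / |y|) (cocompact ℝ) (𝓝 0) ∧
    IsViscSubsol (fun q y => Hα q y ω) μ Set.univ fun y => p * y + v y}

/-- Non-decreasing part of a (convex coercive) Hamiltonian. -/
def Hplus (G : ℝ → ℝ) (p : ℝ) : ℝ := if 0 ≤ p then G p else sInf (Set.range G)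

/-- Non-increasing part of a (convex coercive) Hamiltonian. -/
def Hminus (G : ℝ → ℝ) (p : ℝ) : ℝ := if p ≤ 0 then G p else sInf (Set.range G)

/-! ### The approximated corrector equation -/

/-- Viscosity solution of `δ v + G(Dv, y) = 0` on `ℝ`. -/
def IsViscSolDelta (G : ℝ → ℝ → ℝ) (δ : ℝ) (v : ℝ → ℝ) : Prop :=
  (∀ φ : ℝ → ℝ, ContDiff ℝ 1 φ → ∀ y₀ : ℝ, IsLocalMax (fun y => v y - φ y) y₀ →
    δ * v y₀ + G (deriv φ y₀) y₀ ≤ 0) ∧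
  (∀ φ : ℝ → ℝ, ContDiff ℝ 1 φ → ∀ y₀ : ℝ, IsLocalMin (fun y => v y - φ y) y₀ →
    0 ≤ δ * v y₀ + G (deriv φ y₀) y₀)

/-! ### Evolutive Hamilton–Jacobi equations -/

/-- Viscosity subsolution of `u_t + G(Du, y) = 0` on `(0,T) × ℝ`. -/
def IsViscSubsolEvol (G : ℝ → ℝ → ℝ) (T : ℝ) (u : ℝ → ℝ → ℝ) : Prop :=
  ∀ φ : ℝ × ℝ → ℝ, ContDiff ℝ 1 φ → ∀ t₀ x₀ : ℝ, 0 < t₀ → t₀ < T →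
    IsLocalMaxOn (fun q : ℝ × ℝ => u q.1 q.2 - φ q) (Set.Ioo 0 T ×ˢ Set.univ) (t₀, x₀) →
    deriv (fun t => φ (t, x₀)) t₀ + G (deriv (fun x => φ (t₀, x)) x₀) x₀ ≤ 0

/-- Viscosity supersolution of `u_t + G(Du, y) = 0` on `(0,T) × ℝ`. -/
def IsViscSupersolEvol (G : ℝ → ℝ → ℝ) (T : ℝ) (u : ℝ → ℝ → ℝ) : Prop :=
  ∀ φ : ℝ × ℝ → ℝ, ContDiff ℝ 1 φ → ∀ t₀ x₀ : ℝ, 0 < t₀ → t₀ < T →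
    IsLocalMinOn (fun q : ℝ × ℝ => u q.1 q.2 - φ q) (Set.Ioo 0 T ×ˢ Set.univ) (t₀, x₀) →
    0 ≤ deriv (fun t => φ (t, x₀)) t₀ + G (deriv (fun x => φ (t₀, x)) x₀) x₀

/-! ### The junction problem -/

/-- Test functions for the junction problem: continuous, `C¹` on each side of the junction. -/
def IsPiecewiseC1 (φ : ℝ × ℝ → ℝ) : Prop :=
  Continuous φ ∧ ContDiffOn ℝ 1 φ {q : ℝ × ℝ | q.2 ≤ 0} ∧
    ContDiffOn ℝ 1 φ {q : ℝ × ℝ | 0 ≤ q.2}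

/-- Viscosity subsolution of the junction problem with flux limiter `A`. -/
def IsJunctionSubsol (HLb HRb : ℝ → ℝ) (A T : ℝ) (u : ℝ → ℝ → ℝ) : Prop :=
  ∀ φ : ℝ × ℝ → ℝ, IsPiecewiseC1 φ → ∀ t₀ x₀ : ℝ, 0 < t₀ → t₀ < T →
    IsLocalMaxOn (fun q : ℝ × ℝ => u q.1 q.2 - φ q) (Set.Ioo 0 T ×ˢ Set.univ) (t₀, x₀) →
    (x₀ < 0 → deriv (fun t => φ (t, x₀)) t₀ + HLb (deriv (fun x => φ (t₀, x)) x₀) ≤ 0) ∧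
    (0 < x₀ → deriv (fun t => φ (t, x₀)) t₀ + HRb (deriv (fun x => φ (t₀, x)) x₀) ≤ 0) ∧
    (x₀ = 0 → deriv (fun t => φ (t, 0)) t₀ +
      max A (max (Hplus HLb (derivWithin (fun x => φ (t₀, x)) (Set.Iic 0) 0))
        (Hminus HRb (derivWithin (fun x => φ (t₀, x)) (Set.Ici 0) 0))) ≤ 0)

/-- Viscosity supersolution of the junction problem with flux limiter `A`. -/
def IsJunctionSupersol (HLb HRb : ℝ → ℝ) (A T : ℝ) (u : ℝ → ℝ → ℝ) : Prop :=
  ∀ φ : ℝ × ℝ → ℝ, IsPiecewiseC1 φ → ∀ t₀ x₀ : ℝ, 0 < t₀ → t₀ < T →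
    IsLocalMinOn (fun q : ℝ × ℝ => u q.1 q.2 - φ q) (Set.Ioo 0 T ×ˢ Set.univ) (t₀, x₀) →
    (x₀ < 0 → 0 ≤ deriv (fun t => φ (t, x₀)) t₀ + HLb (deriv (fun x => φ (t₀, x)) x₀)) ∧
    (0 < x₀ → 0 ≤ deriv (fun t => φ (t, x₀)) t₀ + HRb (deriv (fun x => φ (t₀, x)) x₀)) ∧
    (x₀ = 0 → 0 ≤ deriv (fun t => φ (t, 0)) t₀ +
      max A (max (Hplus HLb (derivWithin (fun x => φ (t₀, x)) (Set.Iic 0) 0))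
        (Hminus HRb (derivWithin (fun x => φ (t₀, x)) (Set.Ici 0) 0))))

/-- Solution of the limit junction problem with initial datum `u₀`. -/
def IsJunctionSol (HLb HRb : ℝ → ℝ) (A T : ℝ) (u₀ : ℝ → ℝ) (u : ℝ → ℝ → ℝ) : Prop :=
  ContinuousOn (fun q : ℝ × ℝ => u q.1 q.2) (Set.Ico 0 T ×ˢ Set.univ) ∧
  (∀ y, u 0 y = u₀ y) ∧
  IsJunctionSubsol HLb HRb A T u ∧ IsJunctionSupersol HLb HRb A T u

open scoped NNReal

/-!
Let `σ(y)` be the largest root `p` of `H(p, y) = μ`. A subsolution of `H(Dv, y) ≤ μ` has slope at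
most `σ`, and a primitive of `σ` is a subsolution, so for `x ≤ y` the metric solution is the
integral of `σ` over `[x, y]`. Near an end of the line `H` is a stationary Hamiltonian `G` with unit
range of dependence, and the law of large numbers gives `σ` a deterministic mean `B` there; hence
`m̄(y, x) = B (y - x)` for `x ≤ y` on that side of the origin. For `G` itself, the primitive of `σ`
minus `B y` is a sublinear corrector at level `μ`, and no corrector exists at a lower level because
its slope would stay uniformly below `σ`; hence `H̄(B) = μ`. Reflecting the line handles `y ≤ x`,
so off `x` the homogenized metric is locally affine with slopes solving `H̄ = μ`.
-/

/-! ### Convex profiles -/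

/-- A convex function with minimum at `0` whose sublevel set at height `μ` lies in `[-R, R]`:
the shape of a Hamiltonian as a function of the momentum. -/
structure ConvexWell (g : ℝ → ℝ) (μ : ℝ) (R : ℝ≥0) : Prop where
  convexOn : ConvexOn ℝ univ g
  min_zero : ∀ p, g 0 ≤ g p
  abs_le : ∀ p, g p ≤ μ → |p| ≤ R

/-- The largest `p` with `g p ≤ μ`, and the junk value `sSup ∅ = 0` when there is none. -/
def upperRoot (g : ℝ → ℝ) (μ : ℝ) : ℝ := sSup {p | g p ≤ μ}

namespace ConvexWell

variable {g : ℝ → ℝ} {μ : ℝ} {R : ℝ≥0} {c p : ℝ}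

lemma continuous (h : ConvexWell g μ R) : Continuous g :=
  continuousOn_univ.1 (h.convexOn.continuousOn isOpen_univ)

lemma bddAbove (h : ConvexWell g μ R) : BddAbove {p | g p ≤ μ} :=
  ⟨R, fun p hp => (le_abs_self p).trans (h.abs_le p hp)⟩

lemma le_upperRoot (h : ConvexWell g μ R) (hp : g p ≤ μ) : p ≤ upperRoot g μ :=
  le_csSup h.bddAbove hp

lemma upperRoot_eq_zero_of_lt (h : ConvexWell g μ R) (h0 : μ < g 0) : upperRoot g μ = 0 := by
  have hempty : {p | g p ≤ μ} = ∅ :=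
    eq_empty_of_forall_notMem fun p hp => (h0.trans_le (h.min_zero p)).not_ge hp
  rw [upperRoot, hempty, Real.sSup_empty]

lemma upperRoot_nonneg (h : ConvexWell g μ R) : 0 ≤ upperRoot g μ := by
  rcases le_or_gt (g 0) μ with h0 | h0
  · exact h.le_upperRoot h0
  · exact (h.upperRoot_eq_zero_of_lt h0).ge

lemma abs_upperRoot_le (h : ConvexWell g μ R) : |upperRoot g μ| ≤ R := by
  rw [abs_of_nonneg h.upperRoot_nonneg]
  exact Real.sSup_le (fun p hp => (le_abs_self p).trans (h.abs_le p hp)) R.2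

lemma apply_upperRoot_le (h : ConvexWell g μ R) (h0 : g 0 ≤ μ) : g (upperRoot g μ) ≤ μ :=
  (isClosed_le h.continuous continuous_const).csSup_mem (s := {p | g p ≤ μ}) ⟨0, h0⟩ h.bddAbove

lemma le_upperRoot_iff (h : ConvexWell g μ R) (hc : 0 < c) : c ≤ upperRoot g μ ↔ g c ≤ μ := by
  refine ⟨fun hcb => ?_, h.le_upperRoot⟩
  have h0 : g 0 ≤ μ := by
    by_contra! h0
    exact (hc.trans_le hcb).ne' (h.upperRoot_eq_zero_of_lt h0)
  have hseg : c ∈ segment ℝ 0 (upperRoot g μ) := by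
    rw [segment_eq_Icc h.upperRoot_nonneg]; exact ⟨hc.le, hcb⟩
  exact (h.convexOn.le_max_of_mem_segment (mem_univ _) (mem_univ _) hseg).trans
    (max_le h0 (h.apply_upperRoot_le h0))

lemma lt_of_lt_upperRoot (h : ConvexWell g μ R) (h0 : g 0 < μ) (hc : 0 < c)
    (hcb : c < upperRoot g μ) : g c < μ := by
  have hseg : c ∈ openSegment ℝ 0 (upperRoot g μ) := by
    rw [openSegment_eq_Ioo (hc.trans hcb)]; exact ⟨hc, hcb⟩
  by_contra! hμ
  exact (h.convexOn.lt_right_of_left_lt (mem_univ _) (mem_univ _) hseg (h0.trans_le hμ)).not_ge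
    ((h.apply_upperRoot_le h0.le).trans hμ)

lemma upperRoot_pos (h : ConvexWell g μ R) (h0 : g 0 < μ) : 0 < upperRoot g μ := by
  have hnear : ∀ᶠ c in 𝓝[>] (0 : ℝ), g c < μ :=
    (h.continuous.continuousAt.eventually_lt_const h0).filter_mono nhdsWithin_le_nhds
  obtain ⟨c, hcμ, hc⟩ := (hnear.and self_mem_nhdsWithin).exists
  exact lt_of_lt_of_le hc (h.le_upperRoot hcμ.le)

end ConvexWell

lemma continuous_upperRoot {Y : Type*} [TopologicalSpace Y] {G : ℝ → Y → ℝ} {μ : ℝ} {R : ℝ≥0}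
    (hwell : ∀ y, ConvexWell (G · y) μ R) (hcont : ∀ p, Continuous (G p))
    (hlt : ∀ y, G 0 y < μ) : Continuous fun y => upperRoot (G · y) μ := by
  refine continuous_iff_continuousAt.2 fun y₀ => tendsto_order.2 ⟨fun c hc => ?_, fun c hc => ?_⟩
  · obtain ⟨d, hd, hdroot⟩ := exists_between (max_lt hc ((hwell y₀).upperRoot_pos (hlt y₀)))
    have hGd : G d y₀ < μ :=
      (hwell y₀).lt_of_lt_upperRoot (hlt y₀) ((le_max_right _ _).trans_lt hd) hdroot
    filter_upwards [(hcont d).continuousAt.eventually_lt_const hGd] with y hy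
    exact ((le_max_left _ _).trans_lt hd).trans_le ((hwell y).le_upperRoot hy.le)
  · have hc0 : 0 < c := (hwell y₀).upperRoot_nonneg.trans_lt hc
    have lt_iff (y : Y) : upperRoot (G · y) μ < c ↔ μ < G c y :=
      lt_iff_lt_of_le_iff_le ((hwell y).le_upperRoot_iff hc0)
    simp only [lt_iff] at hc ⊢
    exact (hcont c).continuousAt.eventually_const_lt hc

lemma measurable_upperRoot {Y : Type*} [MeasurableSpace Y] {G : ℝ → Y → ℝ} {μ : ℝ} {R : ℝ≥0}
    (hwell : ∀ y, ConvexWell (G · y) μ R) (hmeas : ∀ p, Measurable (G p)) :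
    Measurable fun y => upperRoot (G · y) μ := by
  refine measurable_of_Ici fun c => ?_
  rcases le_or_gt c 0 with hc | hc
  · have : (fun y => upperRoot (G · y) μ) ⁻¹' Ici c = univ :=
      eq_univ_of_forall fun y => hc.trans (hwell y).upperRoot_nonneg
    simp only [this, MeasurableSet.univ]
  · have : (fun y => upperRoot (G · y) μ) ⁻¹' Ici c = {y | G c y ≤ μ} :=
      ext fun y => (hwell y).le_upperRoot_iff hc
    rw [this]
    exact measurableSet_le (hmeas c) measurable_const

/-! ### Reflection of the space variable -/

/-- The Hamiltonian satisfied by `y ↦ v (-y)` when `v` satisfies `G`. The codomain `α` is `ℝ` for a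
deterministic Hamiltonian and `Ω → ℝ` for a random one. -/
def reflect {α : Type*} (G : ℝ → ℝ → α) : ℝ → ℝ → α := fun p y => G (-p) (-y)

@[simp]
lemma reflect_reflect {α : Type*} (G : ℝ → ℝ → α) : reflect (reflect G) = G := by
  unfold reflect; simp only [neg_neg]

lemma exists_comp_neg {P : (ℝ → ℝ) → Prop} : (∃ v : ℝ → ℝ, P fun y => v (-y)) ↔ ∃ v, P v :=
  ⟨fun ⟨v, hv⟩ => ⟨_, hv⟩, fun ⟨v, hv⟩ => ⟨fun y => v (-y), by simpa only [neg_neg] using hv⟩⟩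

lemma IsLip.comp_neg {v : ℝ → ℝ} (hv : IsLip v) : IsLip fun y => v (-y) :=
  hv.elim fun K hK => ⟨K * 1, hK.comp isometry_neg.lipschitz⟩

lemma isLip_comp_neg {v : ℝ → ℝ} : (IsLip fun y => v (-y)) ↔ IsLip v :=
  ⟨fun hv => by simpa only [neg_neg] using hv.comp_neg, IsLip.comp_neg⟩

lemma IsLip.continuous {v : ℝ → ℝ} (hv : IsLip v) : Continuous v := hv.choose_spec.continuous

namespace IsViscSubsol

variable {G : ℝ → ℝ → ℝ} {μ : ℝ} {v : ℝ → ℝ}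

lemma le_of_isLocalMax (hv : IsViscSubsol G μ univ v) {φ : ℝ → ℝ} (hφ : ContDiff ℝ 1 φ) {y : ℝ}
    (hmax : IsLocalMax (fun s => v s - φ s) y) : G (deriv φ y) y ≤ μ :=
  hv φ hφ y (mem_univ y) (hmax.on univ)

lemma comp_neg (hv : IsViscSubsol G μ univ v) :
    IsViscSubsol (reflect G) μ univ fun y => v (-y) := by
  intro φ hφ y _ hmax
  rw [isLocalMaxOn_univ_iff] at hmax
  have hmax' : IsLocalMax (fun s => v s - φ (-s)) (-y) := by
    have : Tendsto (fun s : ℝ => -s) (𝓝 (-y)) (𝓝 y) := by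
      simpa only [neg_neg] using continuous_neg.tendsto (-y)
    filter_upwards [this.eventually hmax] with s hs
    simpa only [neg_neg] using hs
  have hφ' : ContDiff ℝ 1 fun s => φ (-s) := hφ.comp contDiff_neg
  simpa only [reflect, deriv_comp_neg, neg_neg] using hv.le_of_isLocalMax hφ' hmax'

end IsViscSubsol

lemma isViscSubsol_reflect {G : ℝ → ℝ → ℝ} {μ : ℝ} {v : ℝ → ℝ} :
    IsViscSubsol (reflect G) μ univ (fun y => v (-y)) ↔ IsViscSubsol G μ univ v :=
  ⟨fun hv => by simpa only [reflect_reflect, neg_neg] using hv.comp_neg, IsViscSubsol.comp_neg⟩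

/-! ### Comparison for viscosity subsolutions on the line -/

lemma exists_isLocalMax_mem_Ioo {f : ℝ → ℝ} {a b c : ℝ} (hf : ContinuousOn f (Icc a b))
    (hc : c ∈ Icc a b) (ha : f a < f c) (hb : f b < f c) : ∃ s ∈ Ioo a b, IsLocalMax f s := by
  refine isCompact_Icc.exists_isLocalMax_mem_open Ioo_subset_Icc_self hf hc ?_ isOpen_Ioo
  intro s hs
  rw [Icc_sdiff_Ioo_same (hc.1.trans hc.2)] at hs
  rcases hs with rfl | rfl
  exacts [ha, hb]

lemma exists_increasing_barrier (y D : ℝ) {η : ℝ} (hη : 0 < η) :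
    ∃ ψ : ℝ → ℝ, ContDiff ℝ 1 ψ ∧ (∀ s, 0 < deriv ψ s) ∧ (∀ s, 0 < ψ s) ∧ ψ y = η ∧
      D < ψ (y + 1) - η := by
  set k : ℝ := |D| / η + 1
  have hk : 0 < k := by positivity
  have hderiv (s : ℝ) : HasDerivAt (fun s => η * Real.exp (k * (s - y)))
      (η * (Real.exp (k * (s - y)) * k)) s := by
    simpa only [mul_one, id_eq] using
      (((((hasDerivAt_id s).sub_const y).const_mul k)).exp).const_mul η
  refine ⟨fun s => η * Real.exp (k * (s - y)), by fun_prop, fun s => ?_, fun s => by positivity,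
    by simp, ?_⟩
  · rw [(hderiv s).deriv]; positivity
  · have hexp : η * (k + 1) ≤ η * Real.exp k :=
      mul_le_mul_of_nonneg_left (Real.add_one_le_exp k) hη.le
    have hηk : η * (k + 1) = |D| + 2 * η := by simp only [k]; field_simp; ring
    have := le_abs_self D
    simp only [add_sub_cancel_left, mul_one]
    linarith

lemma contDiff_one_integral {g : ℝ → ℝ} (hg : Continuous g) :
    ContDiff ℝ 1 fun y => ∫ s in (0:ℝ)..y, g s := by
  rw [contDiff_one_iff_deriv, funext (Continuous.deriv_integral g hg 0)]
  exact ⟨fun y => (hg.integral_hasStrictDerivAt 0 y).hasDerivAt.differentiableAt, hg⟩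

lemma lipschitzWith_integral {g : ℝ → ℝ} (hint : ∀ a b, IntervalIntegrable g volume a b)
    {R : ℝ≥0} (hR : ∀ y, |g y| ≤ R) : LipschitzWith R fun y => ∫ s in (0:ℝ)..y, g s :=
  LipschitzWith.of_dist_le_mul fun x y => by
    rw [Real.dist_eq, Real.dist_eq, intervalIntegral.integral_interval_sub_left
      (hint _ _) (hint _ _)]
    exact intervalIntegral.norm_integral_le_of_norm_le_const (f := g) fun s _ => hR s

namespace IsViscSubsol

variable {G : ℝ → ℝ → ℝ} {μ : ℝ} {v g : ℝ → ℝ} {R : ℝ≥0} {x y : ℝ}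

lemma sub_contDiff (hv : IsViscSubsol G μ univ v) {F : ℝ → ℝ} (hF : ContDiff ℝ 1 F) :
    IsViscSubsol (fun p y => G (p + deriv F y) y) μ univ fun y => v y - F y := by
  intro φ hφ y _ hmax
  rw [isLocalMaxOn_univ_iff] at hmax
  have hderiv : deriv (φ + F) y = deriv φ y + deriv F y :=
    deriv_add (hφ.differentiable one_ne_zero y) (hF.differentiable one_ne_zero y)
  change G (deriv φ y + deriv F y) y ≤ μ
  rw [← hderiv]
  refine hv.le_of_isLocalMax (hφ.add hF) ?_
  filter_upwards [hmax] with s hs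
  change v s - (φ s + F s) ≤ v y - (φ y + F y)
  linarith

lemma antitone (hv : IsViscSubsol G μ univ v) (hvc : Continuous v)
    (hG : ∀ p y, G p y ≤ μ → p ≤ 0) : Antitone v := by
  intro x y hxy
  by_contra! hlt
  obtain ⟨η, hη, hηlt⟩ := exists_between (sub_pos.2 hlt)
  obtain ⟨ψ, hψ, hψ', hψpos, hψy, hψD⟩ := exists_increasing_barrier y (v (y + 1) - v y) hη
  obtain ⟨s, -, hs⟩ := exists_isLocalMax_mem_Ioo (f := fun s => v s - ψ s) (c := y)
    (hvc.sub hψ.continuous).continuousOn (a := x) (b := y + 1) ⟨hxy, by linarith⟩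
    (by linarith [hψpos x]) (by linarith)
  exact (hψ' s).not_ge (hG _ _ (hv.le_of_isLocalMax hψ hs))

lemma sub_le_integral (hv : IsViscSubsol G μ univ v) (hvc : Continuous v) (hg : Continuous g)
    (hG : ∀ p y, G p y ≤ μ → p ≤ g y) (hxy : x ≤ y) : v y - v x ≤ ∫ s in x..y, g s := by
  have hF := contDiff_one_integral hg
  have hanti := (hv.sub_contDiff hF).antitone (hvc.sub hF.continuous) fun p y hp => by
    rw [Continuous.deriv_integral g hg] at hp
    linarith [hG _ _ hp]
  rw [← intervalIntegral.integral_interval_sub_left (hg.intervalIntegrable 0 y)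
    (hg.intervalIntegrable 0 x)]
  linarith [hanti hxy]

lemma lipschitzWith (hv : IsViscSubsol G μ univ v) (hvc : Continuous v)
    (hG : ∀ p y, G p y ≤ μ → |p| ≤ R) : LipschitzWith R v := by
  have sub_le {x y : ℝ} (hxy : x ≤ y) : v y - v x ≤ R * (y - x) := by
    have := hv.sub_le_integral hvc continuous_const
      (fun p y hp => (le_abs_self p).trans (hG p y hp)) hxy
    rwa [intervalIntegral.integral_const, smul_eq_mul, mul_comm] at this
  have le_sub {x y : ℝ} (hxy : x ≤ y) : v x - v y ≤ R * (y - x) := by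
    have := hv.comp_neg.sub_le_integral (hvc.comp continuous_neg) continuous_const
      (fun p y hp => (le_abs_self p).trans (by simpa only [abs_neg] using hG _ _ hp))
      (neg_le_neg hxy)
    rwa [intervalIntegral.integral_const, smul_eq_mul, mul_comm, neg_neg, neg_neg,
      neg_sub_neg] at this
  refine LipschitzWith.of_le_add_mul R fun x y => ?_
  rcases le_total x y with hxy | hxy
  · rw [dist_comm, Real.dist_eq, abs_of_nonneg (sub_nonneg.2 hxy)]
    linarith [le_sub hxy]
  · rw [Real.dist_eq, abs_of_nonneg (sub_nonneg.2 hxy)]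
    linarith [sub_le hxy]

lemma apply_zero_le (hv : IsViscSubsol G μ univ v) (hvc : Continuous v)
    (hcont : Continuous (G 0)) (hmin : ∀ p y, G 0 y ≤ G p y) (y : ℝ) : G 0 y ≤ μ := by
  by_contra! hlt
  obtain ⟨r, hr, hball⟩ :=
    Metric.eventually_nhds_iff.1 (hcont.continuousAt.eventually_const_lt hlt)
  -- A parabola this steep forces `v - φ` to have a maximum in the ball where `μ < G 0`.
  set N : ℝ := (|v (y + r) - v y| + |v (y - r) - v y| + 1) / r ^ 2
  have hN : N * r ^ 2 = |v (y + r) - v y| + |v (y - r) - v y| + 1 := by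
    simp only [N]; field_simp
  have hzero : N * (y - y) ^ 2 = 0 := by ring
  have hφ : ContDiff ℝ 1 (fun s : ℝ => N * (s - y) ^ 2) := by fun_prop
  have hright := le_abs_self (v (y + r) - v y)
  have hleft := le_abs_self (v (y - r) - v y)
  obtain ⟨s, hs, hmax⟩ := exists_isLocalMax_mem_Ioo (f := fun s => v s - N * (s - y) ^ 2)
    (hvc.sub hφ.continuous).continuousOn (a := y - r) (b := y + r) (c := y)
    ⟨by linarith, by linarith⟩
    (by simp only [hzero, sub_sub_cancel_left, neg_sq, hN]; linarith [abs_nonneg (v (y + r) - v y)])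
    (by simp only [hzero, add_sub_cancel_left, hN]; linarith [abs_nonneg (v (y - r) - v y)])
  have hsr : dist s y < r := by
    rw [Real.dist_eq, abs_lt]; constructor <;> linarith [hs.1, hs.2]
  exact (hball hsr).not_ge ((hmin _ s).trans (hv.le_of_isLocalMax hφ hmax))

end IsViscSubsol

lemma isViscSubsol_of_hasDerivAt {G : ℝ → ℝ → ℝ} {μ : ℝ} {v g : ℝ → ℝ}
    (hv : ∀ y, HasDerivAt v (g y) y) (hG : ∀ y, G (g y) y ≤ μ) : IsViscSubsol G μ univ v := by
  intro φ hφ y _ hmax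
  rw [isLocalMaxOn_univ_iff] at hmax
  have hderiv := hmax.hasDerivAt_eq_zero
    ((hv y).sub (hφ.differentiable one_ne_zero y).hasDerivAt)
  rw [← sub_eq_zero.1 hderiv]
  exact hG y

lemma isViscSol_of_hasDerivAt {G : ℝ → ℝ → ℝ} {μ : ℝ} {v : ℝ → ℝ} {U : Set ℝ} (hU : IsOpen U)
    (hv : ∀ y ∈ U, ∃ c, HasDerivAt v c y ∧ G c y = μ) : IsViscSol G μ U v := by
  have hderiv {φ : ℝ → ℝ} (hφ : ContDiff ℝ 1 φ) {y : ℝ} (hy : y ∈ U)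
      (hext : IsLocalExtr (fun y => v y - φ y) y) : G (deriv φ y) y = μ := by
    obtain ⟨c, hvc, hc⟩ := hv y hy
    have hzero := hext.hasDerivAt_eq_zero
      (hvc.sub (hφ.differentiable one_ne_zero y).hasDerivAt)
    rwa [← sub_eq_zero.1 hzero]
  exact ⟨fun φ hφ y hy hmax => (hderiv hφ hy (.inr (hmax.isLocalMax (hU.mem_nhds hy)))).le,
    fun φ hφ y hy hmin => (hderiv hφ hy (.inl (hmin.isLocalMin (hU.mem_nhds hy)))).ge⟩

/-! ### Maximal slopes and the metric problem -/

/-- The Hamiltonian `H(·, ·, ω)` at a fixed `ω`. -/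
abbrev realization (H : ℝ → ℝ → Ω → ℝ) (ω : Ω) : ℝ → ℝ → ℝ := fun p y => H p y ω

/-- The largest slope at `y` of a subsolution of `G(Dv, y) ≤ μ`. -/
def maxSlope (G : ℝ → ℝ → ℝ) (μ y : ℝ) : ℝ := upperRoot (G · y) μ

/-- A level `μ` strictly above all minima of a Hamiltonian convex in the momentum. The momenta
below `μ` lie in `[-R, R]`, uniformly in space. -/
structure IsSupercritical (G : ℝ → ℝ → ℝ) (μ : ℝ) (R : ℝ≥0) : Prop where
  well : ∀ y, ConvexWell (G · y) μ R
  continuous : ∀ p, Continuous (G p)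
  lt : ∀ y, G 0 y < μ

lemma IsSupercritical.continuous_maxSlope {G : ℝ → ℝ → ℝ} {μ : ℝ} {R : ℝ≥0}
    (h : IsSupercritical G μ R) : Continuous (maxSlope G μ) :=
  continuous_upperRoot h.well h.continuous h.lt

lemma IsSupercritical.isLip_primitive {G : ℝ → ℝ → ℝ} {μ : ℝ} {R : ℝ≥0}
    (h : IsSupercritical G μ R) : IsLip fun y => ∫ s in (0:ℝ)..y, maxSlope G μ s :=
  ⟨R, lipschitzWith_integral h.continuous_maxSlope.intervalIntegrable
    fun y => (h.well y).abs_upperRoot_le⟩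

lemma IsSupercritical.isViscSubsol_primitive {G : ℝ → ℝ → ℝ} {μ : ℝ} {R : ℝ≥0}
    (h : IsSupercritical G μ R) :
    IsViscSubsol G μ univ fun y => ∫ s in (0:ℝ)..y, maxSlope G μ s :=
  isViscSubsol_of_hasDerivAt
    (fun y => (h.continuous_maxSlope.integral_hasStrictDerivAt 0 y).hasDerivAt)
    fun y => (h.well y).apply_upperRoot_le (h.lt y).le

section Metric

variable {H : ℝ → ℝ → Ω → ℝ} {μ : ℝ} {R : ℝ≥0} {ω : Ω} {x y : ℝ}

lemma IsSupercritical.metricSol_eq_integral (h : IsSupercritical (realization H ω) μ R)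
    (hxy : x ≤ y) : metricSol H μ ω y x = ∫ s in x..y, maxSlope (realization H ω) μ s := by
  refine IsGreatest.csSup_eq ⟨⟨_, h.isLip_primitive, h.isViscSubsol_primitive, ?_⟩, ?_⟩
  · exact (intervalIntegral.integral_interval_sub_left
      (h.continuous_maxSlope.intervalIntegrable _ _)
      (h.continuous_maxSlope.intervalIntegrable _ _)).symm
  · rintro r ⟨v, hv, hsub, rfl⟩
    exact hsub.sub_le_integral hv.continuous h.continuous_maxSlope
      (fun p y hp => (h.well y).le_upperRoot hp) hxy

variable (H μ ω x) in
lemma metricSol_self : metricSol H μ ω x x = 0 := by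
  refine le_antisymm (Real.sSup_le ?_ le_rfl) (Real.sSup_nonneg ?_) <;>
    rintro _ ⟨v, -, -, rfl⟩ <;> simp only [sub_self, le_refl]

lemma lipschitzWith_metricSol (hR : ∀ p y, H p y ω ≤ μ → |p| ≤ R) (x : ℝ) :
    LipschitzWith R (metricSol H μ ω · x) := by
  have hlip {v : ℝ → ℝ} (hv : IsLip v) (hsub : IsViscSubsol (realization H ω) μ univ v) :
      LipschitzWith R v := hsub.lipschitzWith hv.continuous hR
  by_cases hex : ∃ v, IsLip v ∧ IsViscSubsol (realization H ω) μ univ v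
  · obtain ⟨v₀, hv₀, hsub₀⟩ := hex
    refine LipschitzWith.of_le_add_mul R fun y z => csSup_le ⟨_, v₀, hv₀, hsub₀, rfl⟩ ?_
    rintro _ ⟨v, hv, hsub, rfl⟩
    have hle : v z - v x ≤ metricSol H μ ω z x := by
      refine le_csSup ⟨R * dist z x, ?_⟩ ⟨v, hv, hsub, rfl⟩
      rintro _ ⟨u, hu, husub, rfl⟩
      linarith [(hlip hu husub).le_add_mul z x]
    linarith [(hlip hv hsub).le_add_mul y z]
  · have hzero (y : ℝ) : metricSol H μ ω y x = 0 := by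
      refine (congrArg sSup ?_).trans Real.sSup_empty
      exact eq_empty_of_forall_notMem fun r ⟨v, hv, hsub, _⟩ => hex ⟨v, hv, hsub⟩
    simp only [hzero]
    exact LipschitzWith.const' 0

lemma apply_zero_le_fluxLimiter (hcont : Continuous (H 0 · ω)) (hmin : ∀ p y, H 0 y ω ≤ H p y ω)
    (hbdd : BddAbove (range (H 0 · ω))) (y : ℝ) : H 0 y ω ≤ fluxLimiter H ω := by
  obtain ⟨C, hC⟩ := hbdd
  refine le_csInf ⟨C, fun _ => 0, ⟨0, LipschitzWith.const' 0⟩, ?_⟩ ?_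
  · exact isViscSubsol_of_hasDerivAt (g := fun _ => 0) (fun y => hasDerivAt_const y 0)
      fun y => hC ⟨y, rfl⟩
  · rintro ν ⟨v, hv, hsub⟩
    exact hsub.apply_zero_le hv.continuous hcont hmin y

variable (H ω) in
lemma fluxLimiter_reflect : fluxLimiter (reflect H) ω = fluxLimiter H ω := by
  refine congrArg sInf (ext fun ν => exists_comp_neg.symm.trans (exists_congr fun v => ?_))
  exact and_congr isLip_comp_neg (isViscSubsol_reflect (G := realization H ω))

variable (H μ ω y x) in
lemma metricSol_reflect :
    metricSol (reflect H) μ ω y x = metricSol H μ ω (-y) (-x) := by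
  refine congrArg sSup (ext fun r => exists_comp_neg.symm.trans (exists_congr fun v => ?_))
  exact and_congr isLip_comp_neg (and_congr_left' (isViscSubsol_reflect (G := realization H ω)))

end Metric

/-! ### Means and the effective Hamiltonian -/

/-- The function `X` has mean `E` along `l`, where `l` is one of `atTop`, `atBot` and
`cocompact ℝ`: its averages over the intervals from `0` to `t` converge to `E`. -/
def HasMean (l : Filter ℝ) (X : ℝ → ℝ) (E : ℝ) : Prop :=
  Tendsto (fun t => (∫ s in (0:ℝ)..t, X s) / t) l (𝓝 E)

lemma tendsto_div_abs_zero_iff {l : Filter ℝ} {f : ℝ → ℝ} :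
    Tendsto (fun y => f y / |y|) l (𝓝 0) ↔ Tendsto (fun y => f y / y) l (𝓝 0) := by
  rw [tendsto_zero_iff_abs_tendsto_zero, tendsto_zero_iff_abs_tendsto_zero (fun y => f y / y)]
  simp only [Function.comp_def, abs_div, abs_abs]

lemma effectiveHam_reflect (G : ℝ → ℝ → Ω → ℝ) (ω : Ω) (p : ℝ) :
    effectiveHam (reflect G) ω p = effectiveHam G ω (-p) := by
  refine congrArg sInf (ext fun ν => exists_comp_neg.symm.trans (exists_congr fun v => ?_))
  refine and_congr isLip_comp_neg (and_congr ?_ ?_)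
  · have hneg : map Neg.neg (cocompact ℝ) = cocompact ℝ := (Homeomorph.neg ℝ).map_cocompact
    nth_rewrite 2 [← hneg]
    simp only [tendsto_map'_iff, Function.comp_def, abs_neg]
  · rw [← isViscSubsol_reflect (G := realization G ω)]
    simp only [neg_mul_neg]
    rfl

namespace IsSupercritical

variable {H : ℝ → ℝ → Ω → ℝ} {μ ν B : ℝ} {R K : ℝ≥0} {ω : Ω}

lemma le_maxSlope_sub {G : ℝ → ℝ → ℝ} (h : IsSupercritical G μ R)
    (hK : ∀ y, LipschitzWith K (G · y)) {c : ℝ} (hc : 0 ≤ c) (hν : ν + K * c ≤ μ) {p y : ℝ}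
    (hp : G p y ≤ ν) : p ≤ maxSlope G μ y - c := by
  have hlip := (hK y).le_add_mul (p + c) p
  rw [Real.dist_eq, add_sub_cancel_left, abs_of_nonneg hc] at hlip
  exact le_sub_iff_add_le.2 ((h.well y).le_upperRoot (by linarith))

/-- A subsolution at a level `ν < μ` stays below `maxSlope` by a fixed margin `c`, so its mean slope
is at most `B - c`. -/
lemma le_of_isViscSubsol (h : IsSupercritical (realization H ω) μ R)
    (hK : ∀ y, LipschitzWith K (H · y ω)) (hB : HasMean atTop (maxSlope (realization H ω) μ) B)
    {v : ℝ → ℝ} (hv : Continuous v) (hlim : Tendsto (fun y => v y / y) atTop (𝓝 0))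
    (hsub : IsViscSubsol (realization H ω) ν univ fun y => B * y + v y) : μ ≤ ν := by
  by_contra! hlt
  set c : ℝ := (μ - ν) / (K + 1)
  have hc : 0 < c := div_pos (sub_pos.2 hlt) (by positivity)
  have hcK : c * (K + 1) = μ - ν := div_mul_cancel₀ _ (by positivity)
  have hbound (t : ℝ) (ht : 0 ≤ t) :
      B * t + v t - v 0 ≤ (∫ s in (0:ℝ)..t, maxSlope (realization H ω) μ s) - c * t := by
    have := hsub.sub_le_integral (g := fun s => maxSlope (realization H ω) μ s - c) (by fun_prop)
      (h.continuous_maxSlope.sub continuous_const)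
      (fun p y hp => h.le_maxSlope_sub hK hc.le (by linarith) hp) ht
    rw [intervalIntegral.integral_sub (h.continuous_maxSlope.intervalIntegrable _ _)
      intervalIntegrable_const, intervalIntegral.integral_const, smul_eq_mul] at this
    linarith
  have hslope : Tendsto (fun t => B + v t / t - v 0 / t) atTop (𝓝 (B + 0 - 0)) :=
    (hlim.const_add B).sub (tendsto_const_nhds.div_atTop tendsto_id)
  have hle := le_of_tendsto_of_tendsto hslope (hB.sub_const c) <| by
    filter_upwards [eventually_gt_atTop 0] with t ht
    rw [← mul_le_mul_iff_left₀ ht]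
    field_simp
    linarith [hbound t ht.le]
  linarith

lemma effectiveHam_eq (h : IsSupercritical (realization H ω) μ R)
    (hK : ∀ y, LipschitzWith K (H · y ω))
    (hB : HasMean (cocompact ℝ) (maxSlope (realization H ω) μ) B) : effectiveHam H ω B = μ := by
  refine IsLeast.csInf_eq ⟨⟨fun y => (∫ s in (0:ℝ)..y, maxSlope (realization H ω) μ s) - B * y,
    ?_, ?_, ?_⟩, ?_⟩
  · obtain ⟨L, hL⟩ := h.isLip_primitive
    exact ⟨L + _, hL.sub (lipschitzWith_smul B)⟩
  · have hdiff := hB.sub_const B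
    rw [sub_self] at hdiff
    refine tendsto_div_abs_zero_iff.2 (hdiff.congr' ?_)
    filter_upwards [isCompact_singleton.compl_mem_cocompact] with y (hy : y ≠ 0)
    rw [sub_div, mul_div_cancel_right₀ _ hy]
  · simpa only [add_sub_cancel] using h.isViscSubsol_primitive
  · rintro ν ⟨v, hv, hlim, hsub⟩
    exact h.le_of_isViscSubsol hK (hB.mono_left atTop_le_cocompact) hv.continuous
      ((tendsto_div_abs_zero_iff.1 hlim).mono_left atTop_le_cocompact) hsub

end IsSupercritical

/-! ### Means along the line and the law of large numbers -/

lemma intervalIntegrable_comp_neg {X : ℝ → ℝ} (h : ∀ a b, IntervalIntegrable X volume a b)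
    (a b : ℝ) : IntervalIntegrable (fun s => X (-s)) volume a b :=
  (IntervalIntegrable.iff_comp_neg).2 (by simpa only [neg_neg] using h (-a) (-b))

lemma hasMean_comp_neg {l : Filter ℝ} {X : ℝ → ℝ} {E : ℝ} :
    HasMean l (fun s => X (-s)) E ↔ HasMean (map Neg.neg l) X E := by
  rw [HasMean, HasMean, tendsto_map'_iff]
  refine iff_of_eq (congrArg (Tendsto · l (𝓝 E)) (funext fun t => ?_))
  rw [intervalIntegral.integral_comp_neg, neg_zero, intervalIntegral.integral_symm,
    Function.comp_apply, neg_div, div_neg]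

lemma tendsto_div_atTop_of_nat {F : ℝ → ℝ} {R : ℝ≥0} (hF : LipschitzWith R F) {d L : ℝ}
    (hd : 0 < d) (hL : Tendsto (fun n : ℕ => F (d * n) / (d * n)) atTop (𝓝 L)) :
    Tendsto (fun t => F t / t) atTop (𝓝 L) := by
  set n : ℝ → ℕ := fun t => ⌊d⁻¹ * t⌋₊
  have hn : Tendsto n atTop atTop :=
    tendsto_nat_floor_atTop.comp (tendsto_id.const_mul_atTop (inv_pos.2 hd))
  have hratio : Tendsto (fun t => d * (n t / t)) atTop (𝓝 1) := by
    simpa only [mul_inv_cancel₀ hd.ne'] using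
      (tendsto_nat_floor_mul_div_atTop (inv_nonneg.2 hd.le)).const_mul d
  have herror : Tendsto (fun t => (F t - F (d * n t)) / t) atTop (𝓝 0) := by
    refine squeeze_zero_norm' (a := fun t => (R * d) / t) ?_
      (tendsto_const_nhds.div_atTop tendsto_id)
    filter_upwards [eventually_gt_atTop 0] with t ht
    have hle : d * n t ≤ t := by
      calc d * n t ≤ d * (d⁻¹ * t) := by gcongr; exact Nat.floor_le (by positivity)
        _ = t := by field_simp
    have hlt : t ≤ d * n t + d := by
      calc t = d * (d⁻¹ * t) := by field_simp
        _ ≤ d * (n t + 1) := by gcongr; exact (Nat.lt_floor_add_one _).le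
        _ = d * n t + d := by ring
    rw [norm_div, Real.norm_of_nonneg ht.le, ← dist_eq_norm]
    gcongr
    refine (hF.dist_le_mul _ _).trans (mul_le_mul_of_nonneg_left ?_ R.2)
    rw [Real.dist_eq, abs_of_nonneg (sub_nonneg.2 hle)]
    linarith
  have hsum := ((hL.comp hn).mul hratio).add herror
  rw [mul_one, add_zero] at hsum
  refine hsum.congr' ?_
  filter_upwards [eventually_gt_atTop 0, hn.eventually_gt_atTop 0] with t ht hnt
  have hnt' : (n t : ℝ) ≠ 0 := by exact_mod_cast hnt.ne'
  simp only [Function.comp_apply]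
  field_simp
  ring

/-- The integral of the process `X` over the unit interval starting at `c`. -/
def block (X : ℝ → Ω → ℝ) (c : ℝ) (ω : Ω) : ℝ := ∫ s in c..c + 1, X s ω

lemma block_comp_neg (X : ℝ → Ω → ℝ) (c : ℝ) :
    block (fun s => X (-s)) c = block X (-(c + 1)) := by
  funext ω
  simp only [block]
  rw [intervalIntegral.integral_comp_neg fun s => X s ω]
  congr 1
  ring

lemma integral_two_mul_nat_eq_sum_block {X : ℝ → Ω → ℝ} {ω : Ω}
    (hint : ∀ a b, IntervalIntegrable (X · ω) volume a b) (n : ℕ) :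
    ∫ s in (0:ℝ)..2 * n, X s ω =
      ∑ i ∈ Finset.range n, block X (2 * i + 0) ω +
        ∑ i ∈ Finset.range n, block X (2 * i + 1) ω := by
  rw [← Finset.sum_add_distrib]
  have hadj := intervalIntegral.sum_integral_adjacent_intervals (f := (X · ω)) (μ := volume)
    (a := fun k : ℕ => 2 * (k : ℝ)) (n := n) fun k _ => hint _ _
  rw [Nat.cast_zero, mul_zero] at hadj
  rw [← hadj]
  refine Finset.sum_congr rfl fun k _ => ?_
  simp only [block, add_zero]
  rw [intervalIntegral.integral_add_adjacent_intervals (hint _ _) (hint _ _)]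
  congr 1
  push_cast
  ring

/-- A bounded process whose unit blocks are identically distributed, and independent as soon as
their left end points are at distance at least `2`. -/
structure IsBlockProcess [MeasurableSpace Ω] (P : Measure Ω) (X : ℝ → Ω → ℝ) (R : ℝ≥0) : Prop where
  intervalIntegrable : ∀ ω a b, IntervalIntegrable (X · ω) volume a b
  abs_le : ∀ s ω, |X s ω| ≤ R
  identDistrib : ∀ c d, IdentDistrib (block X c) (block X d) P P
  indepFun : ∀ c d, 2 ≤ |c - d| → IndepFun (block X c) (block X d) P

namespace IsBlockProcess

variable [MeasurableSpace Ω] {P : Measure Ω} {X : ℝ → Ω → ℝ} {R : ℝ≥0}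

lemma comp_neg (h : IsBlockProcess P X R) : IsBlockProcess P (fun s => X (-s)) R where
  intervalIntegrable ω := intervalIntegrable_comp_neg (h.intervalIntegrable ω)
  abs_le s ω := h.abs_le (-s) ω
  identDistrib c d := by simpa only [block_comp_neg] using h.identDistrib _ _
  indepFun c d hcd := by
    simp only [block_comp_neg]
    refine h.indepFun _ _ ?_
    rwa [neg_sub_neg, add_sub_add_right_eq_sub, abs_sub_comm]

lemma integrable_block [IsFiniteMeasure P] (h : IsBlockProcess P X R) (c : ℝ) :
    Integrable (block X c) P := by
  refine Integrable.of_bound (h.identDistrib c c).aemeasurable_fst.aestronglyMeasurable R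
    (Eventually.of_forall fun ω => ?_)
  simpa only [block, add_sub_cancel_left, abs_one, mul_one] using
    intervalIntegral.norm_integral_le_of_norm_le_const (a := c) (b := c + 1) (f := (X · ω))
      fun s _ => h.abs_le s ω

lemma ae_tendsto_average [IsProbabilityMeasure P] (h : IsBlockProcess P X R) (r : ℝ) :
    ∀ᵐ ω ∂P, Tendsto (fun n : ℕ => (∑ i ∈ Finset.range n, block X (2 * i + r) ω) / n) atTop
      (𝓝 (∫ ω, block X 0 ω ∂P)) := by
  have hlaw := strong_law_ae_real (μ := P) (fun i : ℕ => block X (2 * i + r))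
    (h.integrable_block _) (fun i j hij => h.indepFun _ _ ?_) (fun i => h.identDistrib _ _)
  · rwa [(h.identDistrib _ 0).integral_eq] at hlaw
  · have hone : (1 : ℝ) ≤ |(i : ℝ) - j| := by
      exact_mod_cast Int.one_le_abs (sub_ne_zero.2 (Int.ofNat_inj.ne.2 hij))
    rw [add_sub_add_right_eq_sub, ← mul_sub, abs_mul, abs_two]
    linarith

lemma ae_hasMean_atTop [IsProbabilityMeasure P] (h : IsBlockProcess P X R) :
    ∀ᵐ ω ∂P, HasMean atTop (X · ω) (∫ ω, block X 0 ω ∂P) := by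
  filter_upwards [h.ae_tendsto_average 0, h.ae_tendsto_average 1] with ω heven hodd
  refine tendsto_div_atTop_of_nat
    (lipschitzWith_integral (h.intervalIntegrable ω) fun s => h.abs_le s ω) two_pos ?_
  -- Adjacent blocks may be dependent, so the even and the odd ones are averaged separately.
  have hhalf := (heven.add hodd).div_const 2
  rw [add_self_div_two] at hhalf
  refine hhalf.congr fun n => ?_
  rw [integral_two_mul_nat_eq_sum_block (h.intervalIntegrable ω), ← add_div, div_div,
    mul_comm (2 : ℝ)]

lemma ae_hasMean_cocompact [IsProbabilityMeasure P] (h : IsBlockProcess P X R) :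
    ∀ᵐ ω ∂P, HasMean (cocompact ℝ) (X · ω) (∫ ω, block X 0 ω ∂P) := by
  have hneg := h.comp_neg.ae_hasMean_atTop
  rw [block_comp_neg, (h.identDistrib _ 0).integral_eq] at hneg
  filter_upwards [h.ae_hasMean_atTop, hneg] with ω htop hbot
  rw [hasMean_comp_neg (X := (X · ω)), map_neg_atTop] at hbot
  rw [cocompact_eq_atBot_atTop]
  exact hbot.sup htop

end IsBlockProcess

/-! ### Stationary Hamiltonians -/

/-- A random Hamiltonian that is convex, Lipschitz, coercive and minimal at `0` in the momentum, and
continuous in space: a weakening of (H1)–(H6) that is stable under `reflect`. -/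
structure ConvexHam (H : ℝ → ℝ → Ω → ℝ) : Prop where
  lipschitz : ∃ K : ℝ≥0, ∀ y ω, LipschitzWith K (H · y ω)
  continuous : ∀ p ω, Continuous (H p · ω)
  bddAbove : ∀ ω, BddAbove (range (H 0 · ω))
  coercive : ∀ μ, ∃ R : ℝ≥0, ∀ p y ω, H p y ω ≤ μ → |p| ≤ R
  convexOn : ∀ y ω, ConvexOn ℝ univ (H · y ω)
  min_zero : ∀ p y ω, H 0 y ω ≤ H p y ω

namespace ConvexHam

variable {H : ℝ → ℝ → Ω → ℝ} {μ : ℝ} {R : ℝ≥0} {ω : Ω}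

lemma reflect (h : ConvexHam H) : ConvexHam (reflect H) where
  lipschitz := h.lipschitz.imp fun K hK y ω => by
    have hcomp := (hK (-y) ω).comp isometry_neg.lipschitz
    rw [mul_one] at hcomp
    exact hcomp
  continuous p ω := (h.continuous (-p) ω).comp continuous_neg
  bddAbove ω := (h.bddAbove ω).mono <| by
    rintro _ ⟨y, rfl⟩
    exact ⟨-y, by simp only [_root_.reflect, neg_zero]⟩
  coercive μ := (h.coercive μ).imp fun R hR p y ω hp => by
    simpa only [abs_neg] using hR (-p) (-y) ω hp
  convexOn y ω := (h.convexOn (-y) ω).comp_linearMap (-LinearMap.id)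
  min_zero p y ω := by simpa only [_root_.reflect, neg_zero] using h.min_zero (-p) (-y) ω

lemma convexWell (h : ConvexHam H) (hR : ∀ p y ω, H p y ω ≤ μ → |p| ≤ R) (y : ℝ) (ω : Ω) :
    ConvexWell (H · y ω) μ R where
  convexOn := h.convexOn y ω
  min_zero p := h.min_zero p y ω
  abs_le p := hR p y ω

lemma isSupercritical (h : ConvexHam H) (hR : ∀ p y ω, H p y ω ≤ μ → |p| ≤ R)
    (hlt : ∀ y, H 0 y ω < μ) : IsSupercritical (realization H ω) μ R where
  well y := h.convexWell hR y ω
  continuous p := h.continuous p ω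
  lt := hlt

lemma intervalIntegrable_maxSlope (h : ConvexHam H)
    (hR : ∀ p y ω, H p y ω ≤ μ → |p| ≤ R) (ω : Ω) (a b : ℝ) :
    IntervalIntegrable (maxSlope (realization H ω) μ) volume a b := by
  have hmeas : Measurable (maxSlope (realization H ω) μ) :=
    measurable_upperRoot (G := realization H ω) (h.convexWell hR · ω) fun p =>
      (h.continuous p ω).measurable
  exact (intervalIntegrable_const (c := (R : ℝ))).mono_fun' hmeas.aestronglyMeasurable
    (Eventually.of_forall fun s => (h.convexWell hR s ω).abs_upperRoot_le)

lemma apply_zero_le_fluxLimiter (h : ConvexHam H) (y : ℝ) (ω : Ω) : H 0 y ω ≤ fluxLimiter H ω :=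
  _root_.apply_zero_le_fluxLimiter (h.continuous 0 ω) (fun p y => h.min_zero p y ω)
    (h.bddAbove ω) y

end ConvexHam

lemma HamHyp.convexHam [MeasurableSpace Ω] {H : ℝ → ℝ → Ω → ℝ} (h : HamHyp H) : ConvexHam H where
  lipschitz := h.lip_p
  continuous p ω := by
    obtain ⟨w, -, hw0, hwc, hw⟩ := h.modulus
    refine continuous_iff_continuousAt.2 fun x => tendsto_iff_dist_tendsto_zero.2 ?_
    have hlim : Tendsto (fun y => |x - y| * (1 + |p|)) (𝓝 x) (𝓝 0) := by
      have : Continuous fun y => |x - y| * (1 + |p|) := by fun_prop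
      simpa only [sub_self, abs_zero, zero_mul] using this.tendsto x
    have hw_lim := hwc.tendsto.comp hlim
    rw [hw0] at hw_lim
    exact squeeze_zero (fun _ => dist_nonneg) (fun y => hw p x y ω) hw_lim
  bddAbove ω := by
    obtain ⟨c₀, C₀, γ, -, -, -, hbounds⟩ := h.bounds
    exact ⟨C₀ * |0 + γ|, by rintro _ ⟨y, rfl⟩; exact (hbounds 0 y ω).2⟩
  coercive μ := by
    obtain ⟨R, hR⟩ := h.coercive (μ + 1)
    refine ⟨R.toNNReal, fun p y ω hp => ?_⟩
    by_contra! hlt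
    linarith [hR p y ω ((Real.le_coe_toNNReal R).trans hlt.le)]
  convexOn := h.convex_p
  min_zero := h.min_at_zero

/-- A Hamiltonian that is stationary under a family of measure-preserving maps and has unit range
of dependence. -/
structure StationaryHam [MeasurableSpace Ω] (P : Measure Ω) (τ : ℝ → Ω → Ω)
    (G : ℝ → ℝ → Ω → ℝ) : Prop extends ConvexHam G where
  measurable : ∀ p y, Measurable (G p y)
  preserving : ∀ z, MeasurePreserving (τ z) P P
  stationary : Stationary τ G
  unitRange : UnitRangeDep P G

/-- The σ-algebra is arbitrary so that it can be the one generated by the Hamiltonian over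
`[c, c + 1]`. -/
lemma measurable_block_maxSlope {m : MeasurableSpace Ω} {G : ℝ → ℝ → Ω → ℝ} {μ : ℝ} {R : ℝ≥0}
    (hwell : ∀ y ω, ConvexWell (G · y ω) μ R) (hcont : ∀ p ω, Continuous (G p · ω)) {c : ℝ}
    (hmeas : ∀ p, ∀ y ∈ Icc c (c + 1), Measurable (G p y)) :
    Measurable (block (fun s ω => maxSlope (realization G ω) μ s) c) := by
  have hc : c ≤ c + 1 := by linarith
  set π : ℝ → ℝ := fun s => projIcc c (c + 1) hc s
  have hjoint (p : ℝ) : Measurable fun q : ℝ × Ω => G p (π q.1) q.2 :=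
    measurable_uncurry_of_continuous_of_measurable
      (fun ω => (hcont p ω).comp (continuous_subtype_val.comp continuous_projIcc))
      fun s => hmeas p _ (projIcc c (c + 1) hc s).2
  have hroot : Measurable fun q : ℝ × Ω => maxSlope (realization G q.2) μ (π q.1) :=
    measurable_upperRoot (fun q => hwell _ _) hjoint
  have hintegral := ((hroot.comp measurable_swap).stronglyMeasurable.integral_prod_right'
    (ν := volume.restrict (Ioc c (c + 1)))).measurable
  convert hintegral using 1
  funext ω
  rw [block, intervalIntegral.integral_of_le hc]
  refine setIntegral_congr_fun measurableSet_Ioc fun s hs => ?_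
  simp only [Function.comp_apply, Prod.swap, π, projIcc_of_mem hc (Ioc_subset_Icc_self hs)]

lemma Stationary.block_maxSlope_add {τ : ℝ → Ω → Ω} {G : ℝ → ℝ → Ω → ℝ} (h : Stationary τ G)
    (μ c z : ℝ) :
    block (fun s ω => maxSlope (realization G ω) μ s) (c + z) =
      block (fun s ω => maxSlope (realization G ω) μ s) c ∘ τ z := by
  funext ω
  simp only [block, Function.comp_apply, maxSlope, ← h _ _ z ω]
  rw [intervalIntegral.integral_comp_add_right fun s => upperRoot (G · s ω) μ, add_right_comm]

section StationaryHam

variable [MeasurableSpace Ω] {P : Measure Ω} {τ : ℝ → Ω → Ω} {G : ℝ → ℝ → Ω → ℝ}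

lemma UnitRangeDep.reflect (h : UnitRangeDep P G) : UnitRangeDep P (reflect G) := by
  have hle (U : Set ℝ) : genSigma (_root_.reflect G) U ≤ genSigma G (Neg.neg ⁻¹' U) :=
    iSup₂_le fun y hy => iSup_le fun p =>
      le_iSup₂_of_le (-y) (by simpa only [mem_preimage, neg_neg] using hy)
        (le_iSup_of_le (-p) le_rfl)
  intro U V hU hV hUV
  refine indep_of_indep_of_le_left (indep_of_indep_of_le_right
    (h _ _ (measurable_neg hU) (measurable_neg hV) fun x hx y hy => ?_) (hle V)) (hle U)
  have hdist := hUV _ hx _ hy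
  rwa [neg_sub_neg, abs_sub_comm] at hdist

namespace StationaryHam

lemma reflect (h : StationaryHam P τ G) : StationaryHam P (fun z => τ (-z)) (reflect G) where
  toConvexHam := h.toConvexHam.reflect
  measurable p y := h.measurable (-p) (-y)
  preserving z := h.preserving (-z)
  stationary p y z ω := by
    simp only [_root_.reflect, neg_add]
    exact h.stationary (-p) (-y) (-z) ω
  unitRange := h.unitRange.reflect

lemma ae_forall_apply_le (h : StationaryHam P τ G) {p y₀ A : ℝ}
    (hA : ∀ᵐ ω ∂P, G p y₀ ω ≤ A) : ∀ᵐ ω ∂P, ∀ y, G p y ω ≤ A := by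
  have hrat : ∀ᵐ ω ∂P, ∀ q : ℚ, G p q ω ≤ A := ae_all_iff.2 fun q => by
    filter_upwards [(h.preserving (q - y₀)).quasiMeasurePreserving.ae hA] with ω hω
    rwa [← h.stationary, add_sub_cancel] at hω
  filter_upwards [hrat] with ω hω y
  exact Rat.isDenseEmbedding_coe_real.dense.induction (P := fun y => G p y ω ≤ A)
    (by rintro _ ⟨q, rfl⟩; exact hω q) (isClosed_le (h.continuous p ω) continuous_const) y

end StationaryHam

lemma measurable_genSigma {U : Set ℝ} {p y : ℝ} (hy : y ∈ U) : Measurable[genSigma G U] (G p y) :=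
  Measurable.of_comap_le (le_iSup₂_of_le y hy (le_iSup_of_le p le_rfl))

namespace StationaryHam

variable {μ : ℝ} {R : ℝ≥0}

lemma isBlockProcess_maxSlope (h : StationaryHam P τ G)
    (hR : ∀ p y ω, G p y ω ≤ μ → |p| ≤ R) :
    IsBlockProcess P (fun s ω => maxSlope (realization G ω) μ s) R where
  intervalIntegrable := h.intervalIntegrable_maxSlope hR
  abs_le s ω := (h.convexWell hR s ω).abs_upperRoot_le
  identDistrib c d := by
    have hmeas (c : ℝ) : Measurable (block (fun s ω => maxSlope (realization G ω) μ s) c) :=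
      measurable_block_maxSlope (h.convexWell hR) h.continuous fun p y _ => h.measurable p y
    refine ⟨(hmeas c).aemeasurable, (hmeas d).aemeasurable, ?_⟩
    rw [← add_sub_cancel d c, h.stationary.block_maxSlope_add,
      ← Measure.map_map (hmeas d) (h.preserving _).measurable, (h.preserving _).map_eq]
  indepFun c d hcd := by
    have hle (c : ℝ) : MeasurableSpace.comap
        (block (fun s ω => maxSlope (realization G ω) μ s) c) inferInstance ≤
          genSigma G (Icc c (c + 1)) :=
      (measurable_block_maxSlope (h.convexWell hR) h.continuous
        fun p y hy => measurable_genSigma hy).comap_le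
    refine indep_of_indep_of_le_left (indep_of_indep_of_le_right
      (h.unitRange _ _ measurableSet_Icc measurableSet_Icc fun x hx y hy => ?_) (hle d)) (hle c)
    rcases le_abs.1 hcd with hcd | hcd
    · exact le_abs.2 (Or.inl (by linarith [hx.1, hy.2]))
    · exact le_abs.2 (Or.inr (by linarith [hx.2, hy.1]))

lemma exists_ae_hasMean_maxSlope [IsProbabilityMeasure P] (h : StationaryHam P τ G)
    (μ : ℝ) : ∃ B, ∀ᵐ ω ∂P, HasMean (cocompact ℝ) (maxSlope (realization G ω) μ) B := by
  obtain ⟨R, hR⟩ := h.coercive μ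
  exact ⟨_, (h.isBlockProcess_maxSlope hR).ae_hasMean_cocompact⟩

end StationaryHam

end StationaryHam

/-! ### Slopes of the homogenized metric -/

/-- One of the two ends of the line. -/
def IsEnd (l : Filter ℝ) : Prop := l = atTop ∨ l = atBot

/-- The closed half-line whose dilations by `t → +∞` run off to the end `l`. -/
def asymptoticRay (l : Filter ℝ) : Set ℝ := {x | x = 0 ∨ Tendsto (fun t => t * x) atTop l}

section End

variable {l : Filter ℝ}

lemma IsEnd.neBot (hl : IsEnd l) : NeBot l := by
  rcases hl with rfl | rfl <;> infer_instance

lemma IsEnd.le_cocompact (hl : IsEnd l) : l ≤ cocompact ℝ := by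
  rcases hl with rfl | rfl
  exacts [atTop_le_cocompact, atBot_le_cocompact]

lemma IsEnd.map_neg (hl : IsEnd l) : IsEnd (map Neg.neg l) := by
  rcases hl with rfl | rfl
  exacts [.inr map_neg_atTop, .inl map_neg_atBot]

lemma Ici_subset_asymptoticRay : Ici 0 ⊆ asymptoticRay atTop := fun _ hx =>
  (eq_or_lt_of_le hx).imp Eq.symm tendsto_id.atTop_mul_const

lemma Iic_subset_asymptoticRay : Iic 0 ⊆ asymptoticRay atBot := fun _ hx =>
  (eq_or_lt_of_le hx).imp id tendsto_id.atTop_mul_const_of_neg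

lemma neg_mem_asymptoticRay {x : ℝ} (hx : x ∈ asymptoticRay l) :
    -x ∈ asymptoticRay (map Neg.neg l) :=
  hx.imp neg_eq_zero.2 fun h => by
    simpa only [mul_neg, Function.comp_def] using tendsto_map.comp h

lemma HasMean.congr_atTop {X Y : ℝ → ℝ} {E : ℝ} (h : HasMean atTop X E)
    (hX : ∀ a b, IntervalIntegrable X volume a b) (hY : ∀ a b, IntervalIntegrable Y volume a b)
    (hXY : X =ᶠ[atTop] Y) : HasMean atTop Y E := by
  obtain ⟨r, hr⟩ := eventually_atTop.1 hXY
  have hlim := h.add (tendsto_const_nhds.div_atTop tendsto_id :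
    Tendsto (fun t => ((∫ s in (0:ℝ)..r, Y s) - ∫ s in (0:ℝ)..r, X s) / t) atTop (𝓝 0))
  rw [add_zero] at hlim
  refine hlim.congr' ?_
  filter_upwards [eventually_ge_atTop r] with t ht
  have htail : ∫ s in r..t, X s = ∫ s in r..t, Y s :=
    intervalIntegral.integral_congr fun s hs => hr s (uIcc_of_le ht ▸ hs).1
  rw [← add_div, ← intervalIntegral.integral_add_adjacent_intervals (hX 0 r) (hX r t), htail,
    ← intervalIntegral.integral_add_adjacent_intervals (hY 0 r) (hY r t)]
  ring

lemma HasMean.congr {X Y : ℝ → ℝ} {E : ℝ} (h : HasMean l X E) (hl : IsEnd l)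
    (hX : ∀ a b, IntervalIntegrable X volume a b) (hY : ∀ a b, IntervalIntegrable Y volume a b)
    (hXY : X =ᶠ[l] Y) : HasMean l Y E := by
  rcases hl with rfl | rfl
  · exact h.congr_atTop hX hY hXY
  · rw [← map_neg_atTop, ← hasMean_comp_neg] at h ⊢
    exact h.congr_atTop (intervalIntegrable_comp_neg hX) (intervalIntegrable_comp_neg hY)
      (tendsto_neg_atTop_atBot.eventually hXY)

lemma HasMean.tendsto_integral_mul_div {X : ℝ → ℝ} {E x : ℝ} (h : HasMean l X E)
    (hx : x ∈ asymptoticRay l) :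
    Tendsto (fun t => (∫ s in (0:ℝ)..t * x, X s) / t) atTop (𝓝 (E * x)) := by
  rcases eq_or_ne x 0 with rfl | hx0
  · simp only [mul_zero, intervalIntegral.integral_same, zero_div, tendsto_const_nhds]
  · refine ((h.comp (hx.resolve_left hx0)).mul_const x).congr fun t => ?_
    rw [Function.comp_apply, div_mul_eq_mul_div, mul_div_mul_right _ _ hx0]

lemma IsSupercritical.tendsto_metricSol_div {H : ℝ → ℝ → Ω → ℝ} {μ B x y : ℝ} {R : ℝ≥0} {ω : Ω}
    (h : IsSupercritical (realization H ω) μ R)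
    (hB : HasMean l (maxSlope (realization H ω) μ) B)
    (hx : x ∈ asymptoticRay l) (hy : y ∈ asymptoticRay l) (hxy : x ≤ y) :
    Tendsto (fun t => metricSol H μ ω (t * y) (t * x) / t) atTop (𝓝 (B * (y - x))) := by
  have hlim := (hB.tendsto_integral_mul_div hy).sub (hB.tendsto_integral_mul_div hx)
  rw [← mul_sub] at hlim
  refine hlim.congr' ?_
  filter_upwards [eventually_ge_atTop 0] with t ht
  have hint := h.continuous_maxSlope.intervalIntegrable (μ := volume)
  rw [h.metricSol_eq_integral (mul_le_mul_of_nonneg_left hxy ht), ← sub_div,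
    intervalIntegral.integral_interval_sub_left (hint _ _) (hint _ _)]

end End

section Homogenization

variable [MeasurableSpace Ω] {P : Measure Ω} {τ : ℝ → Ω → Ω} {G H : ℝ → ℝ → Ω → ℝ} {A μ x : ℝ}
  {mbar : ℝ → ℝ → ℝ} {Hbar : ℝ → ℝ} {l : Filter ℝ}

/-- Almost surely the flux limiter of `H` is `A`, and `mbar` is the large-scale limit of the metric
solutions at level `μ`. -/
def IsHomogenizedMetric (P : Measure Ω) (H : ℝ → ℝ → Ω → ℝ) (A μ : ℝ) (mbar : ℝ → ℝ → ℝ) : Prop :=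
  ∀ᵐ ω ∂P, fluxLimiter H ω = A ∧ ∀ x y : ℝ,
    Tendsto (fun t : ℝ => metricSol H μ ω (t * y) (t * x) / t) atTop (𝓝 (mbar y x))

/-- `Hbar` is almost surely the effective Hamiltonian of `G`. -/
def IsEffectiveHam (P : Measure Ω) (G : ℝ → ℝ → Ω → ℝ) (Hbar : ℝ → ℝ) : Prop :=
  ∀ᵐ ω ∂P, ∀ p : ℝ, effectiveHam G ω p = Hbar p

lemma IsHomogenizedMetric.reflect (h : IsHomogenizedMetric P H A μ mbar) :
    IsHomogenizedMetric P (reflect H) A μ fun y x => mbar (-y) (-x) := by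
  filter_upwards [h] with ω ⟨hA, hlim⟩
  refine ⟨(fluxLimiter_reflect H ω).trans hA, fun x y => ?_⟩
  simpa only [metricSol_reflect, mul_neg] using hlim (-x) (-y)

lemma IsEffectiveHam.reflect (h : IsEffectiveHam P G Hbar) :
    IsEffectiveHam P (reflect G) fun p => Hbar (-p) := by
  filter_upwards [h] with ω hω p
  rw [effectiveHam_reflect, hω]

lemma IsHomogenizedMetric.self_eq_zero [NeZero P] (h : IsHomogenizedMetric P H A μ mbar) (x : ℝ) :
    mbar x x = 0 := by
  obtain ⟨ω, -, hlim⟩ := h.exists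
  refine tendsto_nhds_unique (hlim x x) ?_
  simp only [metricSol_self, zero_div, tendsto_const_nhds]

lemma IsHomogenizedMetric.isLip [NeZero P] (h : IsHomogenizedMetric P H A μ mbar)
    (hH : ConvexHam H) (x : ℝ) : IsLip (mbar · x) := by
  obtain ⟨ω, -, hlim⟩ := h.exists
  obtain ⟨R, hR⟩ := hH.coercive μ
  refine ⟨R, LipschitzWith.of_dist_le_mul fun y z => ?_⟩
  refine le_of_tendsto ((hlim x y).dist (hlim x z)) ?_
  filter_upwards [eventually_gt_atTop 0] with t ht
  have hdist := (lipschitzWith_metricSol (fun p y => hR p y ω) (t * x)).dist_le_mul (t * y) (t * z)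
  rw [Real.dist_eq, Real.dist_eq, ← mul_sub, abs_mul, abs_of_pos ht] at hdist
  rw [Real.dist_eq, ← sub_div, abs_div, abs_of_pos ht, div_le_iff₀ ht, Real.dist_eq]
  linarith

/-- Stationarity carries the bound from the end `l` to the whole line. -/
lemma IsHomogenizedMetric.ae_apply_zero_le [NeBot l] (h : IsHomogenizedMetric P H A μ mbar)
    (hH : ConvexHam H) (hG : StationaryHam P τ G) (hHG : ∀ᶠ y in l, ∀ p ω, H p y ω = G p y ω) :
    ∀ᵐ ω ∂P, ∀ y, G 0 y ω ≤ A := by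
  obtain ⟨y₀, hy₀⟩ := hHG.exists
  refine hG.ae_forall_apply_le (y₀ := y₀) ?_
  filter_upwards [h] with ω ⟨hA, _⟩
  rw [← hy₀, ← hA]
  exact hH.apply_zero_le_fluxLimiter y₀ ω

lemma IsHomogenizedMetric.exists_slope_of_le [IsProbabilityMeasure P]
    (h : IsHomogenizedMetric P H A μ mbar) (hμ : A < μ) (hH : ConvexHam H)
    (hG : StationaryHam P τ G) (hl : IsEnd l) (hHG : ∀ᶠ y in l, ∀ p ω, H p y ω = G p y ω)
    (hHbar : IsEffectiveHam P G Hbar) :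
    ∃ B, Hbar B = μ ∧ ∀ x ∈ asymptoticRay l, ∀ y ∈ asymptoticRay l, x ≤ y →
      mbar y x = B * (y - x) := by
  have := hl.neBot
  obtain ⟨RG, hRG⟩ := hG.coercive μ
  obtain ⟨RH, hRH⟩ := hH.coercive μ
  obtain ⟨K, hK⟩ := hG.lipschitz
  obtain ⟨B, hB⟩ := hG.exists_ae_hasMean_maxSlope μ
  obtain ⟨ω, ⟨hA, hlim⟩, hGA, hBω, hHbarω⟩ :=
    (h.and ((h.ae_apply_zero_le hH hG hHG).and (hB.and hHbar))).exists
  have hGsuper := hG.isSupercritical hRG fun y => (hGA y).trans_lt hμ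
  have hHsuper := hH.isSupercritical hRH fun y =>
    ((hH.apply_zero_le_fluxLimiter y ω).trans_eq hA).trans_lt hμ
  have hBH : HasMean l (maxSlope (realization H ω) μ) B :=
    HasMean.congr (hBω.mono_left hl.le_cocompact) hl
      hGsuper.continuous_maxSlope.intervalIntegrable
      hHsuper.continuous_maxSlope.intervalIntegrable <| by
        filter_upwards [hHG] with y hy
        simp only [maxSlope, hy]
  exact ⟨B, (hHbarω B).symm.trans (hGsuper.effectiveHam_eq (hK · ω) hBω), fun x hx y hy hxy =>
    tendsto_nhds_unique (hlim x y) (hHsuper.tendsto_metricSol_div hBH hx hy hxy)⟩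

lemma IsHomogenizedMetric.exists_slope_of_ge [IsProbabilityMeasure P]
    (h : IsHomogenizedMetric P H A μ mbar) (hμ : A < μ) (hH : ConvexHam H)
    (hG : StationaryHam P τ G) (hl : IsEnd l) (hHG : ∀ᶠ y in l, ∀ p ω, H p y ω = G p y ω)
    (hHbar : IsEffectiveHam P G Hbar) :
    ∃ B, Hbar B = μ ∧ ∀ x ∈ asymptoticRay l, ∀ y ∈ asymptoticRay l, y ≤ x →
      mbar y x = B * (y - x) := by
  have hHG_neg : ∀ᶠ y in map Neg.neg l, ∀ p ω, _root_.reflect H p y ω = _root_.reflect G p y ω :=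
    eventually_map.2 (hHG.mono fun y hy p ω => by simp only [_root_.reflect, neg_neg, hy])
  obtain ⟨B, hB, hslope⟩ :=
    h.reflect.exists_slope_of_le hμ hH.reflect hG.reflect hl.map_neg hHG_neg hHbar.reflect
  refine ⟨-B, hB, fun x hx y hy hyx => ?_⟩
  have hreflected := hslope (-x) (neg_mem_asymptoticRay hx) (-y) (neg_mem_asymptoticRay hy)
    (neg_le_neg hyx)
  rw [neg_neg, neg_neg] at hreflected
  rw [hreflected]
  ring

lemma hasDerivAt_of_eventually_eq_mul_sub {m : ℝ → ℝ} {c x y : ℝ}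
    (h : ∀ᶠ z in 𝓝 y, m z = c * (z - x)) : HasDerivAt m c y := by
  have hlinear := ((hasDerivAt_id y).sub_const x).const_mul c
  rw [mul_one] at hlinear
  exact hlinear.congr_of_eventuallyEq h

lemma IsHomogenizedMetric.isViscSol [IsProbabilityMeasure P]
    (h : IsHomogenizedMetric P H A μ mbar) (hμ : A < μ) (hH : ConvexHam H)
    (hG : StationaryHam P τ G) (hl : IsEnd l) (hHG : ∀ᶠ y in l, ∀ p ω, H p y ω = G p y ω)
    (hHbar : IsEffectiveHam P G Hbar) {U : Set ℝ} (hU : IsOpen U) (hUl : U ⊆ asymptoticRay l)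
    (hx : x ∈ asymptoticRay l) : IsViscSol (fun p _ => Hbar p) μ (U \ {x}) (mbar · x) := by
  obtain ⟨B, hB, hright⟩ := h.exists_slope_of_le hμ hH hG hl hHG hHbar
  obtain ⟨C, hC, hleft⟩ := h.exists_slope_of_ge hμ hH hG hl hHG hHbar
  refine isViscSol_of_hasDerivAt (hU.sdiff isClosed_singleton) fun y ⟨hy, (hyx : y ≠ x)⟩ => ?_
  rcases hyx.lt_or_gt with hlt | hgt
  · refine ⟨C, hasDerivAt_of_eventually_eq_mul_sub (x := x) ?_, hC⟩
    filter_upwards [hU.mem_nhds hy, Iio_mem_nhds hlt] with z hz hzx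
    exact hleft x hx z (hUl hz) hzx.le
  · refine ⟨B, hasDerivAt_of_eventually_eq_mul_sub (x := x) ?_, hB⟩
    filter_upwards [hU.mem_nhds hy, Ioi_mem_nhds hgt] with z hz hxz
    exact hright x hx z (hUl hz) hxz.le

end Homogenization

/-! ### The homogenized metric equation -/

section Cutoff

variable {HL HR H0 H : ℝ → ℝ → Ω → ℝ}

lemma eventually_eq_of_cutoff {φ : ℝ → ℝ} (hφL : ∀ y ≤ -1, φ y = 1) (hφR : ∀ y, 1 ≤ y → φ y = 0)
    (hH : ∀ p y ω, H p y ω = φ y * HL p y ω + (1 - φ y) * HR p y ω) :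
    (∀ᶠ y in atTop, ∀ p ω, H p y ω = HR p y ω) ∧ ∀ᶠ y in atBot, ∀ p ω, H p y ω = HL p y ω := by
  constructor
  · filter_upwards [eventually_ge_atTop 1] with y hy p ω
    rw [hH, hφR y hy]
    ring
  · filter_upwards [eventually_le_atBot (-1)] with y hy p ω
    rw [hH, hφL y hy]
    ring

lemma eventually_eq_of_double_cutoff {ψ : ℝ → ℝ} {a b : ℝ} (hψ_one : ∀ y, b < y → ψ y = 1)
    (hψ_zero : ∀ y < a, ψ y = 0)
    (hH : ∀ p y ω, H p y ω =
      ψ (-y) * HL p y ω + (1 - ψ (-y)) * (1 - ψ y) * H0 p y ω + ψ y * HR p y ω) :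
    (∀ᶠ y in atTop, ∀ p ω, H p y ω = HR p y ω) ∧ ∀ᶠ y in atBot, ∀ p ω, H p y ω = HL p y ω := by
  constructor
  · filter_upwards [eventually_gt_atTop b, eventually_gt_atTop (-a)] with y hb ha p ω
    rw [hH, hψ_one y hb, hψ_zero (-y) (neg_lt.1 ha)]
    ring
  · filter_upwards [eventually_lt_atBot (-b), eventually_lt_atBot a] with y hb ha p ω
    rw [hH, hψ_one (-y) (lt_neg.1 hb), hψ_zero y ha]
    ring

end Cutoff

lemma HamHyp.stationaryHam [MeasurableSpace Ω] {P : Measure Ω} {τ : ℝ → Ω → Ω}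
    {G : ℝ → ℝ → Ω → ℝ} (hG : HamHyp G) (hτ : ∀ z, MeasurePreserving (τ z) P P)
    (hstat : Stationary τ G) (hdep : UnitRangeDep P G) : StationaryHam P τ G where
  toConvexHam := hG.convexHam
  measurable _ _ := hG.meas.comp (measurable_const.prodMk (measurable_const.prodMk measurable_id))
  preserving := hτ
  stationary := hstat
  unitRange := hdep

theorem homogenized_metric_equation_general [MeasurableSpace Ω] {P : Measure Ω}
    [IsProbabilityMeasure P] {τL τR : ℝ → Ω → Ω} {HL HR H : ℝ → ℝ → Ω → ℝ}
    (hL : StationaryHam P τL HL) (hR : StationaryHam P τR HR) (hH : ConvexHam H)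
    (hHR : ∀ᶠ y in atTop, ∀ p ω, H p y ω = HR p y ω)
    (hHL : ∀ᶠ y in atBot, ∀ p ω, H p y ω = HL p y ω)
    {A μ : ℝ} (hμ : A < μ) {mbar : ℝ → ℝ → ℝ} (hm : IsHomogenizedMetric P H A μ mbar)
    {HbarL HbarR : ℝ → ℝ} (hHbarL : IsEffectiveHam P HL HbarL)
    (hHbarR : IsEffectiveHam P HR HbarR) :
    (∀ x : ℝ, 0 ≤ x → IsLip (fun y => mbar y x) ∧ mbar x x = 0 ∧
      IsViscSol (fun p _ => HbarR p) μ ({y : ℝ | 0 < y} \ {x}) fun y => mbar y x) ∧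
    (∀ x : ℝ, x ≤ 0 → IsLip (fun y => mbar y x) ∧ mbar x x = 0 ∧
      IsViscSol (fun p _ => HbarL p) μ ({y : ℝ | y < 0} \ {x}) fun y => mbar y x) := by
  refine ⟨fun x hx => ⟨hm.isLip hH x, hm.self_eq_zero x, ?_⟩,
    fun x hx => ⟨hm.isLip hH x, hm.self_eq_zero x, ?_⟩⟩
  · exact hm.isViscSol hμ hH hR (.inl rfl) hHR hHbarR isOpen_Ioi
      (Ioi_subset_Ici_self.trans Ici_subset_asymptoticRay) (Ici_subset_asymptoticRay hx)
  · exact hm.isViscSol hμ hH hL (.inr rfl) hHL hHbarL isOpen_Iio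
      (Iio_subset_Iic_self.trans Iic_subset_asymptoticRay) (Iic_subset_asymptoticRay hx)

/-- the homogenized metric `m̄_μ(·,x)` is Lipschitz and solves
`H̄_R(D m̄_μ) = μ` on `{y > 0} \ {x}` for `x ≥ 0` (resp. `H̄_L(D m̄_μ) = μ` on
`{y < 0} \ {x}` for `x ≤ 0`), with `m̄_μ(x,x) = 0`. -/
theorem homogenized_metric_equation [MeasurableSpace Ω]
    (P : Measure Ω) [IsProbabilityMeasure P]
    (τ : ℝ → Ω → Ω) (hτ : ErgodicSetup P τ)
    (HL HR H0 H : ℝ → ℝ → Ω → ℝ)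
    (hHL : HamHyp HL) (hHR : HamHyp HR) (hH0 : HamHyp H0) (hH : HamHyp H)
    (hstatL : Stationary τ HL) (hstatR : Stationary τ HR) (hstat0 : Stationary τ H0)
    (hdepL : UnitRangeDep P HL) (hdepR : UnitRangeDep P HR) (hdep0 : UnitRangeDep P H0)
    (hdecomp :
      (∃ φ : ℝ → ℝ, ContDiff ℝ (⊤ : ℕ∞) φ ∧ Antitone φ ∧
        (∀ y : ℝ, y ≤ -1 → φ y = 1) ∧ (∀ y : ℝ, 1 ≤ y → φ y = 0) ∧
        ∀ (p y : ℝ) (ω : Ω), H p y ω = φ y * HL p y ω + (1 - φ y) * HR p y ω) ∨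
      (∃ ε : ℝ, 0 < ε ∧
        (∀ (p y : ℝ) (ω : Ω), HL p y ω ≤ H0 p y ω ∧ HR p y ω ≤ H0 p y ω) ∧
        ∃ ψ : ℝ → ℝ, ContDiff ℝ (⊤ : ℕ∞) ψ ∧
          (∀ y : ℝ, 2 / Real.sqrt ε < y → ψ y = 1) ∧
          (∀ y : ℝ, y < 1 / Real.sqrt ε → ψ y = 0) ∧
          ∀ (p y : ℝ) (ω : Ω), H p y ω =
            ψ (-y) * HL p y ω + (1 - ψ (-y)) * (1 - ψ y) * H0 p y ω + ψ y * HR p y ω))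
    (Abar μ : ℝ) (hμ : Abar < μ)
    (mbar : ℝ → ℝ → ℝ)
    (Ω₀ : Set Ω) (hΩ₀meas : MeasurableSet Ω₀) (hΩ₀full : P Ω₀ = 1)
    (hconv : ∀ ω ∈ Ω₀, fluxLimiter H ω = Abar ∧ ∀ x y : ℝ,
      Tendsto (fun t : ℝ => metricSol H μ ω (t * y) (t * x) / t) atTop (𝓝 (mbar y x)))
    (HbarL HbarR : ℝ → ℝ)
    (hHbarL : ∀ᵐ ω ∂P, ∀ p : ℝ, effectiveHam HL ω p = HbarL p)
    (hHbarR : ∀ᵐ ω ∂P, ∀ p : ℝ, effectiveHam HR ω p = HbarR p) :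
    (∀ x : ℝ, 0 ≤ x → IsLip (fun y => mbar y x) ∧ mbar x x = 0 ∧
      IsViscSol (fun p _ => HbarR p) μ ({y : ℝ | 0 < y} \ {x}) fun y => mbar y x) ∧
    (∀ x : ℝ, x ≤ 0 → IsLip (fun y => mbar y x) ∧ mbar x x = 0 ∧
      IsViscSol (fun p _ => HbarL p) μ ({y : ℝ | y < 0} \ {x}) fun y => mbar y x) := by
  have hm : IsHomogenizedMetric P H Abar μ mbar :=
    mem_of_superset ((mem_ae_iff_prob_eq_one hΩ₀meas).2 hΩ₀full) hconv
  obtain ⟨hright, hleft⟩ : (∀ᶠ y in atTop, ∀ p ω, H p y ω = HR p y ω) ∧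
      ∀ᶠ y in atBot, ∀ p ω, H p y ω = HL p y ω := by
    rcases hdecomp with ⟨φ, -, -, hφL, hφR, hHφ⟩ | ⟨ε, -, -, ψ, -, hψ_one, hψ_zero, hHψ⟩
    · exact eventually_eq_of_cutoff hφL hφR hHφ
    · exact eventually_eq_of_double_cutoff hψ_one hψ_zero hHψ
  exact homogenized_metric_equation_general (hHL.stationaryHam hτ.preserving hstatL hdepL)
    (hHR.stationaryHam hτ.preserving hstatR hdepR) hH.convexHam hright hleft hμ hm hHbarL hHbarR
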